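/- Assume g_i^{jk} ∈ ℝ for 0 ≤ i,j,k ≤ 2 with g_i^{jk} = g_i^{kj}, and Σ_{i,j,k=0}^2 g_i^{jk} p_i p_j p_k = 0 for every p = (p₀,p₁,p₂) ∈ ℝ³ satisfying p₀² = p₁² + p₂². Then for every n ∈ ℕ there exists a constant C_n > 0 such that for all T > 0, all f ∈ C^∞([0,T]×ℝ²), and all (t,x) ∈ [0,T]×ℝ² with x ≠ 0: Σ_{|α|≤n} |Γ^α(Σ_{i,j,k=0}^2 g_i^{jk} ∂_i f ∂²_{jk} f)(t,x) − Σ_{i,j,k=0}^2 g_i^{jk}(∂_i f ∂²_{jk} Γ^α f)(t,x)| ≤ C_n Σ_{|β+ν|≤n+1, |β|≤n, |ν|≤n} |ZΓ^β f(t,x)||Γ^ν ∂f(t,x)|. -/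

import Mathlib

/-!
Write `Q(u, v) = Σ g_i^{jk} ∂_i u ∂²_{jk} v`. Every field `Γ_a` is a derivation with
`[∂_i, Γ_a] = κ_a ∂_i`, where `κ_a` is `1` for the scaling field and `0` otherwise. Hence
`Γ_a Q(u, v) = Q(Γ_a u, v) + Q(u, Γ_a v) - 3 κ_a Q(u, v)` (`GG_QQ`), and by induction on the word
`w`, the difference `Γ^w Q(f, f) - Q(f, Γ^w f)` is a linear combination, with coefficients
independent of `f`, of terms `Q(Γ^β f, Γ^γ f)` with `|β| + |γ| ≤ |w|` and `|γ| < |w|`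
(`commutator_mem_Err`).

For a single term, substitute `∂_i = Z_i - ω_i ∂_t` with the null covector
`ω = (-1, x₁/|x|, x₂/|x|)` (and `Z_0 = 0`). The null condition removes the only term without a
factor `Z` (`QQ_null`), so `Q(u, v)` is bounded by `|Zu| |∂²v| + |∂u| |Z∂v|`. With `u = Γ^β f` and
`v = Γ^γ f`, moving `∂` to the right of the words (`dd_GW_mem`) bounds this by the right-hand side
of the estimate (`QQ_bound`); the strict inequality `|γ| < |w|` is what keeps the word `∂Γ^γ`
within length `n`.

The argument is carried out in the algebra `Sm` of smooth functions, on which the fields are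
linear maps, so that being a linear combination with coefficients independent of `f` is membership
in a span inside `Sm → Sm`.
-/

noncomputable section

open Real MeasureTheory Set

set_option linter.unusedVariables false

/-- A function of time `t` and space `(x, y)`. -/
abbrev F3 : Type := ℝ → ℝ → ℝ → ℝ

/-- Partial derivative in time. -/
def pt (f : F3) : F3 := fun t x y => deriv (fun s => f s x y) t
/-- Partial derivative in the first space variable. -/
def px (f : F3) : F3 := fun t x y => deriv (fun s => f t s y) x
/-- Partial derivative in the second space variable. -/
def py (f : F3) : F3 := fun t x y => deriv (fun s => f t x s) y

/-- `∂ = (∂_t, ∂_1, ∂_2)`. -/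
def pdi : Fin 3 → F3 → F3 := ![pt, px, py]

/-- The scaling field `X = t∂_t + x₁∂₁ + x₂∂₂`. -/
def Xf (f : F3) : F3 := fun t x y => t * pt f t x y + x * px f t x y + y * py f t x y
/-- The rotation field `Ω = x₁∂₂ − x₂∂₁`. -/
def Om (f : F3) : F3 := fun t x y => x * py f t x y - y * px f t x y
/-- The Lorentz boost `L₁ = t∂₁ + x₁∂_t`. -/
def L1f (f : F3) : F3 := fun t x y => t * px f t x y + x * pt f t x y
/-- The Lorentz boost `L₂ = t∂₂ + x₂∂_t`. -/
def L2f (f : F3) : F3 := fun t x y => t * py f t x y + y * pt f t x y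

/-- The family `Γ = (∂_t, ∂_1, ∂_2, X)`. -/
def GammaF : Fin 4 → F3 → F3 := ![pt, px, py, Xf]

/-- Iterated composition `Γ^α` over a word `α`. -/
def GIter : List (Fin 4) → F3 → F3
  | [], f => f
  | a :: l, f => GammaF a (GIter l f)

/-- The family `Λ = (∂_t, ∂_1, ∂_2, Ω, X, L₁, L₂)`. -/
def LamF : Fin 7 → F3 → F3 := ![pt, px, py, Om, Xf, L1f, L2f]

/-- Iterated composition `Λ^α` over a word `α`. -/
def LIter : List (Fin 7) → F3 → F3
  | [], f => f
  | a :: l, f => LamF a (LIter l f)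

/-- Iterated composition `∂^β` over a word `β`. -/
def PIter : List (Fin 3) → F3 → F3
  | [], f => f
  | a :: l, f => pdi a (PIter l f)

/-- `r = |x|`. -/
def rad (x y : ℝ) : ℝ := Real.sqrt (x ^ 2 + y ^ 2)
/-- `σ₋(t,x) = 1 + |t − |x||`. -/
def sm (t x y : ℝ) : ℝ := 1 + |t - rad x y|
/-- `σ₊(t,x) = 1 + t + |x|`. -/
def sp (t x y : ℝ) : ℝ := 1 + t + rad x y

/-- `f` is a `C^∞` function of `(t, x)`. -/
def Smooth3 (f : F3) : Prop := ContDiff ℝ (⊤ : ℕ∞) (fun p : ℝ × ℝ × ℝ => f p.1 p.2.1 p.2.2)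

/-- `Z₁ = ∂₁ + (x₁/|x|)∂_t`. -/
def Z1 (f : F3) : F3 := fun t x y => px f t x y + (x / rad x y) * pt f t x y
/-- `Z₂ = ∂₂ + (x₂/|x|)∂_t`. -/
def Z2 (f : F3) : F3 := fun t x y => py f t x y + (y / rad x y) * pt f t x y
/-- The family `Z = (Z₁, Z₂)`. -/
def Zi : Fin 2 → F3 → F3 := ![Z1, Z2]

/-- `f` is radially symmetric in the space variables. -/
def RadialF (f : F3) : Prop := ∀ t x y x' y', rad x y = rad x' y' → f t x y = f t x' y'

/-! ### Partial derivatives and Fréchet derivatives -/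

/-- The function on `ℝ × ℝ × ℝ` underlying a curried function. -/
def unc (f : F3) : ℝ × ℝ × ℝ → ℝ := fun p => f p.1 p.2.1 p.2.2

/-- The standard basis of `ℝ × ℝ × ℝ`. -/
def bas : Fin 3 → ℝ × ℝ × ℝ := ![(1, 0, 0), (0, 1, 0), (0, 0, 1)]

theorem Smooth3.differentiable {f : F3} (hf : Smooth3 f) : Differentiable ℝ (unc f) :=
  ContDiff.differentiable hf (by simp)

theorem pdi_eq_fderiv {f : F3} (hf : Smooth3 f) (i : Fin 3) (t x y : ℝ) :
    pdi i f t x y = fderiv ℝ (unc f) (t, x, y) (bas i) := by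
  have hd := (hf.differentiable (t, x, y)).hasFDerivAt
  fin_cases i
  · have h1 : HasDerivAt (fun s : ℝ => (s, x, y)) ((1 : ℝ), (0 : ℝ), (0 : ℝ)) t :=
      (hasDerivAt_id t).prodMk ((hasDerivAt_const t x).prodMk (hasDerivAt_const t y))
    exact (hd.comp_hasDerivAt t h1).deriv
  · have h1 : HasDerivAt (fun s : ℝ => (t, s, y)) ((0 : ℝ), (1 : ℝ), (0 : ℝ)) x :=
      (hasDerivAt_const x t).prodMk ((hasDerivAt_id x).prodMk (hasDerivAt_const x y))
    exact (hd.comp_hasDerivAt x h1).deriv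
  · have h1 : HasDerivAt (fun s : ℝ => (t, x, s)) ((0 : ℝ), (0 : ℝ), (1 : ℝ)) y :=
      (hasDerivAt_const y t).prodMk ((hasDerivAt_const y x).prodMk (hasDerivAt_id y))
    exact (hd.comp_hasDerivAt y h1).deriv

theorem unc_pdi {f : F3} (hf : Smooth3 f) (i : Fin 3) :
    unc (pdi i f) = fun p => fderiv ℝ (unc f) p (bas i) := by
  funext p
  exact pdi_eq_fderiv hf i p.1 p.2.1 p.2.2

theorem Smooth3.pdi {f : F3} (hf : Smooth3 f) (i : Fin 3) : Smooth3 (pdi i f) := by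
  change ContDiff ℝ _ (unc (_root_.pdi i f))
  rw [unc_pdi hf i]
  have h : ContDiff ℝ (⊤ : ℕ∞) (fderiv ℝ (unc f)) :=
    ContDiff.fderiv_right (m := (⊤ : ℕ∞)) (n := (⊤ : ℕ∞)) hf (by simp)
  exact h.clm_apply contDiff_const

theorem pdi_comm {f : F3} (hf : Smooth3 f) (i j : Fin 3) :
    pdi i (pdi j f) = pdi j (pdi i f) := by
  have key : ∀ (a b : Fin 3) (p : ℝ × ℝ × ℝ),
      fderiv ℝ (unc (pdi b f)) p (bas a) = fderiv ℝ (fderiv ℝ (unc f)) p (bas a) (bas b) := by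
    intro a b p
    have h : ContDiff ℝ (⊤ : ℕ∞) (fderiv ℝ (unc f)) :=
      ContDiff.fderiv_right (m := (⊤ : ℕ∞)) (n := (⊤ : ℕ∞)) hf (by simp)
    have h' : DifferentiableAt ℝ (fderiv ℝ (unc f)) p := h.differentiable (by simp) p
    rw [unc_pdi hf b, fderiv_clm_apply h' (differentiableAt_const _)]
    simp
  funext t x y
  rw [pdi_eq_fderiv (hf.pdi j), pdi_eq_fderiv (hf.pdi i), key, key]
  have hs : ContDiffAt ℝ (⊤ : ℕ∞) (unc f) (t, x, y) := ContDiff.contDiffAt hf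
  have h2 : minSmoothness ℝ 2 ≤ ((⊤ : ℕ∞) : WithTop ℕ∞) := by
    rw [minSmoothness_of_isRCLikeNormedField]
    exact WithTop.coe_le_coe.2 (le_top : (2 : ℕ∞) ≤ ⊤)
  exact hs.isSymmSndFDerivAt h2 _ _

/-! ### The algebra of smooth functions and its derivations -/

/-- The algebra of smooth functions of `(t, x)`. -/
def Sm : Subalgebra ℝ F3 where
  carrier := {f | Smooth3 f}
  mul_mem' := fun {a b} (ha : Smooth3 a) (hb : Smooth3 b) =>
    show Smooth3 (a * b) from ContDiff.mul ha hb
  add_mem' := fun {a b} (ha : Smooth3 a) (hb : Smooth3 b) =>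
    show Smooth3 (a + b) from ContDiff.add ha hb
  algebraMap_mem' := fun r => show Smooth3 (algebraMap ℝ F3 r) from
    (contDiff_const : ContDiff ℝ _ fun _ : ℝ × ℝ × ℝ => r)

/-- `∂_i` acting on the algebra of smooth functions. -/
def dd (i : Fin 3) : Sm →ₗ[ℝ] Sm where
  toFun f := ⟨pdi i f.1, Smooth3.pdi f.2 i⟩
  map_add' f h := by
    ext t x y
    change pdi i (f + h : Sm).1 t x y = pdi i f.1 t x y + pdi i h.1 t x y
    rw [pdi_eq_fderiv (f + h).2, pdi_eq_fderiv f.2, pdi_eq_fderiv h.2]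
    change fderiv ℝ (unc f.1 + unc h.1) _ _ = _
    rw [fderiv_add (Smooth3.differentiable f.2 _) (Smooth3.differentiable h.2 _)]
    rfl
  map_smul' c f := by
    ext t x y
    change pdi i (c • f : Sm).1 t x y = c * pdi i f.1 t x y
    rw [pdi_eq_fderiv (c • f).2, pdi_eq_fderiv f.2]
    change fderiv ℝ (c • unc f.1) _ _ = _
    rw [fderiv_const_smul (Smooth3.differentiable f.2 _)]
    rfl

theorem dd_apply (i : Fin 3) (f : Sm) : (dd i f : Sm).1 = pdi i f.1 := rfl

theorem dd_mul (i : Fin 3) (f h : Sm) : dd i (f * h) = dd i f * h + f * dd i h := by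
  ext t x y
  change pdi i (f * h : Sm).1 t x y =
    pdi i f.1 t x y * h.1 t x y + f.1 t x y * pdi i h.1 t x y
  rw [pdi_eq_fderiv (f * h).2, pdi_eq_fderiv f.2, pdi_eq_fderiv h.2]
  change fderiv ℝ (unc f.1 * unc h.1) _ _ = _
  rw [fderiv_mul (Smooth3.differentiable f.2 _) (Smooth3.differentiable h.2 _)]
  simp [unc]
  ring

theorem dd_comm (i j : Fin 3) (f : Sm) : dd i (dd j f) = dd j (dd i f) :=
  Subtype.ext (pdi_comm f.2 i j)

/-- The coordinate functions `t, x₁, x₂`. -/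
def coord : Fin 3 → Sm :=
  ![⟨fun t _ _ => t, show Smooth3 (fun t _ _ => t) from contDiff_fst⟩,
    ⟨fun _ x _ => x, show Smooth3 (fun _ x _ => x) from contDiff_fst.comp contDiff_snd⟩,
    ⟨fun _ _ y => y, show Smooth3 (fun _ _ y => y) from contDiff_snd.comp contDiff_snd⟩]

theorem dd_coord (i j : Fin 3) : dd i (coord j) = if i = j then 1 else 0 := by
  ext t x y
  fin_cases i <;> fin_cases j <;> simp [dd_apply, coord, pdi, pt, px, py]

/-- The scaling field acting on the algebra of smooth functions. -/
def XX : Sm →ₗ[ℝ] Sm := ∑ j, (LinearMap.mulLeft ℝ (coord j)) ∘ₗ dd j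

theorem XX_apply (f : Sm) : XX f = ∑ j, coord j * dd j f := by
  simp [XX]

theorem XX_val (f : Sm) : (XX f).1 = Xf f.1 := by
  rw [XX_apply, Fin.sum_univ_three]
  rfl

theorem XX_mul (f h : Sm) : XX (f * h) = XX f * h + f * XX h := by
  simp only [XX_apply, dd_mul, Fin.sum_univ_three]
  ring

theorem dd_XX (i : Fin 3) (f : Sm) : dd i (XX f) = XX (dd i f) + dd i f := by
  simp only [XX_apply, map_sum, dd_mul, dd_coord, Finset.sum_add_distrib, ite_mul, one_mul,
    zero_mul, Finset.sum_ite_eq, Finset.mem_univ, if_true]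
  rw [add_comm]
  simp only [dd_comm i]

/-- The family `Γ` acting on the algebra of smooth functions. -/
def GG : Fin 4 → Sm →ₗ[ℝ] Sm := ![dd 0, dd 1, dd 2, XX]

/-- The commutator constant of a field of `Γ`: `[∂_i, Γ_a] = κ_a ∂_i`, with `κ = 1` for the
scaling field and `κ = 0` for the translations. -/
def kap : Fin 4 → ℝ := ![0, 0, 0, 1]

theorem GG_val (a : Fin 4) (f : Sm) : (GG a f).1 = GammaF a f.1 := by
  fin_cases a
  · rfl
  · rfl
  · rfl
  · exact XX_val f

theorem GG_mul (a : Fin 4) (f h : Sm) : GG a (f * h) = GG a f * h + f * GG a h := by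
  fin_cases a
  · exact dd_mul _ _ _
  · exact dd_mul _ _ _
  · exact dd_mul _ _ _
  · exact XX_mul _ _

theorem dd_GG (i : Fin 3) (a : Fin 4) (f : Sm) :
    dd i (GG a f) = GG a (dd i f) + kap a • dd i f := by
  fin_cases a
  · simpa [GG, kap] using dd_comm _ _ _
  · simpa [GG, kap] using dd_comm _ _ _
  · simpa [GG, kap] using dd_comm _ _ _
  · simpa [GG, kap] using dd_XX _ _

theorem GG_castSucc (i : Fin 3) : GG i.castSucc = dd i := by
  fin_cases i <;> rfl

/-- The iterated composition `Γ^w` acting on the algebra of smooth functions. -/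
def GW : List (Fin 4) → Sm →ₗ[ℝ] Sm
  | [] => LinearMap.id
  | a :: l => GG a ∘ₗ GW l

theorem GW_cons (a : Fin 4) (l : List (Fin 4)) (f : Sm) : GW (a :: l) f = GG a (GW l f) := rfl

theorem GW_val (w : List (Fin 4)) (f : Sm) : (GW w f).1 = GIter w f.1 := by
  induction w with
  | nil => rfl
  | cons a l ih => rw [GW_cons, GG_val, ih]; rfl

/-! ### Commuting `∂` and the null form with `Γ^w` -/

/-- `∂_i Γ^w` is a linear combination of the `Γ^v ∂_i` with `|v| ≤ |w|`. -/
theorem dd_GW_mem (i : Fin 3) (w : List (Fin 4)) :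
    dd i ∘ₗ GW w ∈ Submodule.span ℝ
      {D : Sm →ₗ[ℝ] Sm | ∃ v : List (Fin 4), v.length ≤ w.length ∧ D = GW v ∘ₗ dd i} := by
  induction w with
  | nil => exact Submodule.subset_span ⟨[], le_rfl, rfl⟩
  | cons a l ih =>
    have h : dd i ∘ₗ GW (a :: l) = GG a ∘ₗ (dd i ∘ₗ GW l) + kap a • (dd i ∘ₗ GW l) := by
      ext1 f
      exact dd_GG i a (GW l f)
    rw [h]
    refine add_mem ?_ (Submodule.smul_mem _ _ ?_)
    · refine Submodule.span_induction
        (p := fun D _ => GG a ∘ₗ D ∈ Submodule.span ℝ {D : Sm →ₗ[ℝ] Sm |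
          ∃ v : List (Fin 4), v.length ≤ (a :: l).length ∧ D = GW v ∘ₗ dd i}) ?_ ?_ ?_ ?_ ih
      · rintro D ⟨v, hv, rfl⟩
        exact Submodule.subset_span ⟨a :: v, by simpa using hv, rfl⟩
      · simp
      · intro D E _ _ hD hE
        rw [LinearMap.comp_add]
        exact add_mem hD hE
      · intro c D _ hD
        rw [LinearMap.comp_smul]
        exact Submodule.smul_mem _ _ hD
    · refine Submodule.span_mono ?_ ih
      rintro D ⟨v, hv, rfl⟩
      exact ⟨v, hv.trans (by simp), rfl⟩

/-- The form `Q(u, v) = Σ g_i^{jk} ∂_i u ∂²_{jk} v`. -/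
def QQ (g : Fin 3 → Fin 3 → Fin 3 → ℝ) (u v : Sm) : Sm :=
  ∑ i, ∑ j, ∑ k, g i j k • (dd i u * dd j (dd k v))

theorem QQ_val (g : Fin 3 → Fin 3 → Fin 3 → ℝ) (u v : Sm) (t x y : ℝ) :
    (QQ g u v).1 t x y =
      ∑ i, ∑ j, ∑ k, g i j k * pdi i u.1 t x y * pdi j (pdi k v.1) t x y := by
  simp only [QQ, AddSubmonoidClass.coe_finsetSum, Finset.sum_apply, mul_assoc]
  rfl

/-- Leibniz rule for `Q`: the three derivatives in `Q` each contribute one commutator `κ_a`. -/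
theorem GG_QQ (g : Fin 3 → Fin 3 → Fin 3 → ℝ) (a : Fin 4) (u v : Sm) :
    GG a (QQ g u v) = QQ g (GG a u) v + QQ g u (GG a v) + (-3 * kap a) • QQ g u v := by
  simp only [QQ, map_sum, map_smul, GG_mul, dd_GG, map_add, Finset.smul_sum,
    ← Finset.sum_add_distrib]
  refine Finset.sum_congr rfl fun i _ => Finset.sum_congr rfl fun j _ =>
    Finset.sum_congr rfl fun k _ => ?_
  simp only [add_mul, mul_add, smul_add, smul_mul_assoc, mul_smul_comm, smul_smul]
  module

/-- The linear combinations, with coefficients independent of `f`, of the operators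
`f ↦ Q(Γ^β f, Γ^γ f)` with `|β| + |γ| ≤ m` and `|γ| < m`. -/
def Err (g : Fin 3 → Fin 3 → Fin 3 → ℝ) (m : ℕ) : Submodule ℝ (Sm → Sm) :=
  Submodule.span ℝ {D | ∃ β γ : List (Fin 4), β.length + γ.length ≤ m ∧ γ.length < m ∧
    D = fun f => QQ g (GW β f) (GW γ f)}

theorem GG_Err (g : Fin 3 → Fin 3 → Fin 3 → ℝ) (a : Fin 4) {m : ℕ} {D : Sm → Sm}
    (hD : D ∈ Err g m) : (fun f => GG a (D f)) ∈ Err g (m + 1) := by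
  refine Submodule.span_induction
    (p := fun D _ => (fun f => GG a (D f)) ∈ Err g (m + 1)) ?_ ?_ ?_ ?_ hD
  · rintro D ⟨β, γ, h1, h2, rfl⟩
    have h : (fun f => GG a (QQ g (GW β f) (GW γ f))) =
        (fun f => QQ g (GW (a :: β) f) (GW γ f)) + (fun f => QQ g (GW β f) (GW (a :: γ) f)) +
          (-3 * kap a) • (fun f => QQ g (GW β f) (GW γ f)) := by
      funext f
      exact GG_QQ g a _ _
    rw [h]
    refine add_mem (add_mem ?_ ?_) (Submodule.smul_mem _ _ ?_)
    · exact Submodule.subset_span ⟨_, _, by simp; omega, by omega, rfl⟩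
    · exact Submodule.subset_span ⟨_, _, by simp; omega, by simp; omega, rfl⟩
    · exact Submodule.subset_span ⟨_, _, by omega, by omega, rfl⟩
  · have h : (fun f => GG a ((0 : Sm → Sm) f)) = 0 := by
      funext f
      simp
    rw [h]
    exact zero_mem _
  · intro D E _ _ hD hE
    have h : (fun f => GG a ((D + E) f)) = (fun f => GG a (D f)) + fun f => GG a (E f) := by
      funext f
      simp
    rw [h]
    exact add_mem hD hE
  · intro c D _ hD
    have h : (fun f => GG a ((c • D) f)) = c • fun f => GG a (D f) := by
      funext f
      simp
    rw [h]
    exact Submodule.smul_mem _ _ hD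

/-- `Γ^w Q(f, f) - Q(f, Γ^w f)` is a combination of terms `Q(Γ^β f, Γ^γ f)` in which at most
`|w| - 1` fields fall on the second argument: the term with all fields there has coefficient one
and cancels. -/
theorem commutator_mem_Err (g : Fin 3 → Fin 3 → Fin 3 → ℝ) (w : List (Fin 4)) :
    (fun f => GW w (QQ g f f) - QQ g f (GW w f)) ∈ Err g w.length := by
  induction w with
  | nil =>
    have h : (fun f : Sm => GW [] (QQ g f f) - QQ g f (GW [] f)) = 0 := by
      funext f
      exact sub_self _
    rw [h]
    exact zero_mem _
  | cons a l ih =>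
    have h : (fun f : Sm => GW (a :: l) (QQ g f f) - QQ g f (GW (a :: l) f)) =
        (fun f => GG a (GW l (QQ g f f) - QQ g f (GW l f))) +
          ((fun f => QQ g (GW [a] f) (GW l f)) +
            (-3 * kap a) • (fun f => QQ g (GW [] f) (GW l f))) := by
      funext f
      simp only [Pi.add_apply, Pi.smul_apply, GW_cons, map_sub, GG_QQ]
      simp only [GW, LinearMap.id_apply]
      abel
    rw [h]
    refine add_mem (GG_Err g a ih) (add_mem ?_ (Submodule.smul_mem _ _ ?_))
    · exact Submodule.subset_span ⟨_, _, by simp; omega, by simp, rfl⟩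
    · exact Submodule.subset_span ⟨_, _, by simp, by simp, rfl⟩

/-! ### The null structure -/

/-- The field `∂_i + ω_i ∂_t` at a point, for `ω = (-1, x₁/|x|, x₂/|x|)`; it vanishes for `i = 0`
and is `Z_i` for `i = 1, 2`. -/
def ZZ : Fin 3 → F3 → F3 := ![fun _ => 0, Z1, Z2]

/-- The null covector `ω = (-1, x₁/|x|, x₂/|x|)`. -/
def om (x y : ℝ) : Fin 3 → ℝ := ![-1, x / rad x y, y / rad x y]

theorem pdi_eq_ZZ (i : Fin 3) (f : F3) (t x y : ℝ) :
    pdi i f t x y = ZZ i f t x y - om x y i * pdi 0 f t x y := by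
  fin_cases i <;> simp [pdi, ZZ, om, Z1, Z2]

theorem om_null {x y : ℝ} (h : (x, y) ≠ ((0 : ℝ), (0 : ℝ))) :
    (om x y 0) ^ 2 = (om x y 1) ^ 2 + (om x y 2) ^ 2 := by
  have hpos : 0 < x ^ 2 + y ^ 2 := by
    by_contra hn
    have hx : x = 0 := by nlinarith [sq_nonneg x, sq_nonneg y]
    have hy : y = 0 := by nlinarith [sq_nonneg x, sq_nonneg y]
    exact h (by rw [hx, hy])
  have hr : rad x y ^ 2 = x ^ 2 + y ^ 2 := Real.sq_sqrt hpos.le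
  simp only [om, Matrix.cons_val]
  rw [div_pow, div_pow, hr]
  field_simp

theorem abs_om_le (x y : ℝ) (i : Fin 3) : |om x y i| ≤ 1 := by
  have hx : |x| ≤ rad x y := Real.abs_le_sqrt (by nlinarith [sq_nonneg y])
  have hy : |y| ≤ rad x y := Real.abs_le_sqrt (by nlinarith [sq_nonneg x])
  have h0 : 0 ≤ rad x y := Real.sqrt_nonneg _
  fin_cases i
  · simp [om]
  · simpa [om, abs_div, abs_of_nonneg h0] using div_le_one_of_le₀ hx h0
  · simpa [om, abs_div, abs_of_nonneg h0] using div_le_one_of_le₀ hy h0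

/-- Substituting `∂_i = Z_i - ω_i ∂_t` in every slot of `Q(u, v)`, the only term without a factor
`Z` has coefficient `Σ g_i^{jk} ω_i ω_j ω_k = 0`. -/
theorem QQ_null {g : Fin 3 → Fin 3 → Fin 3 → ℝ}
    (hnull : ∀ p : Fin 3 → ℝ, (p 0) ^ 2 = (p 1) ^ 2 + (p 2) ^ 2 →
      ∑ i, ∑ j, ∑ k, g i j k * p i * p j * p k = 0)
    (u v : Sm) (t x y : ℝ) (hxy : (x, y) ≠ ((0 : ℝ), (0 : ℝ))) :
    (QQ g u v).1 t x y = ∑ i, ∑ j, ∑ k, g i j k *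
      (ZZ i u.1 t x y * pdi j (pdi k v.1) t x y
        - om x y i * pdi 0 u.1 t x y * ZZ j (pdi k v.1) t x y
        + om x y i * om x y j * pdi 0 u.1 t x y * ZZ k (pdi 0 v.1) t x y) := by
  have h0 := hnull (om x y) (om_null hxy)
  have key : ∀ i j k, g i j k * pdi i u.1 t x y * pdi j (pdi k v.1) t x y =
      g i j k * (ZZ i u.1 t x y * pdi j (pdi k v.1) t x y
        - om x y i * pdi 0 u.1 t x y * ZZ j (pdi k v.1) t x y
        + om x y i * om x y j * pdi 0 u.1 t x y * ZZ k (pdi 0 v.1) t x y)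
      - g i j k * om x y i * om x y j * om x y k *
        (pdi 0 u.1 t x y * pdi 0 (pdi 0 v.1) t x y) := by
    intro i j k
    have h1 := pdi_eq_ZZ i u.1 t x y
    have h2 := pdi_eq_ZZ j (pdi k v.1) t x y
    have h3 := pdi_eq_ZZ k (pdi 0 v.1) t x y
    rw [pdi_comm v.2 k 0] at h3
    rw [h3] at h2
    linear_combination (g i j k * pdi j (pdi k v.1) t x y) * h1 -
      (g i j k * om x y i * pdi 0 u.1 t x y) * h2
  rw [QQ_val]
  simp only [key, Finset.sum_sub_distrib, ← Finset.sum_mul]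
  rw [h0]
  ring

/-! ### Pointwise bounds -/

/-- The right-hand side of the estimate, without the constant. -/
def RHS (n : ℕ) (f : F3) (t x y : ℝ) : ℝ :=
  ∑ b ∈ Finset.range (n + 1), ∑ c ∈ Finset.range (n + 1),
    (if b + c ≤ n + 1 then
      ∑ wb : Fin b → Fin 4, ∑ wc : Fin c → Fin 4,
        (⨆ i : Fin 2, |Zi i (GIter (List.ofFn wb) f) t x y|) *
        (⨆ j : Fin 3, |GIter (List.ofFn wc) (pdi j f) t x y|)
    else 0)

theorem RHS_term_nonneg (β ν : List (Fin 4)) (f : F3) (t x y : ℝ) :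
    0 ≤ (⨆ i : Fin 2, |Zi i (GIter β f) t x y|) * (⨆ j : Fin 3, |GIter ν (pdi j f) t x y|) :=
  mul_nonneg (Real.iSup_nonneg fun _ => abs_nonneg _) (Real.iSup_nonneg fun _ => abs_nonneg _)

theorem RHS_inner_nonneg (n b c : ℕ) (f : F3) (t x y : ℝ) :
    0 ≤ (if b + c ≤ n + 1 then
      ∑ wb : Fin b → Fin 4, ∑ wc : Fin c → Fin 4,
        (⨆ i : Fin 2, |Zi i (GIter (List.ofFn wb) f) t x y|) *
        (⨆ j : Fin 3, |GIter (List.ofFn wc) (pdi j f) t x y|)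
    else 0) := by
  split_ifs
  · exact Finset.sum_nonneg fun _ _ => Finset.sum_nonneg fun _ _ => RHS_term_nonneg _ _ _ _ _ _
  · exact le_rfl

theorem RHS_nonneg (n : ℕ) (f : F3) (t x y : ℝ) : 0 ≤ RHS n f t x y :=
  Finset.sum_nonneg fun _ _ => Finset.sum_nonneg fun _ _ => RHS_inner_nonneg _ _ _ _ _ _ _

theorem abs_ZZ_le (i : Fin 3) (f : F3) (t x y : ℝ) :
    |ZZ i f t x y| ≤ ⨆ i : Fin 2, |Zi i f t x y| := by
  have hb : BddAbove (Set.range fun i : Fin 2 => |Zi i f t x y|) := (Set.finite_range _).bddAbove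
  fin_cases i
  · simpa [ZZ] using Real.iSup_nonneg (fun i : Fin 2 => abs_nonneg (Zi i f t x y))
  · exact le_ciSup hb 0
  · exact le_ciSup hb 1

theorem ZZ_mul_le_RHS {n : ℕ} {β ν : List (Fin 4)} (hβ : β.length ≤ n) (hν : ν.length ≤ n)
    (h : β.length + ν.length ≤ n + 1) (i j : Fin 3) (f : F3) (t x y : ℝ) :
    |ZZ i (GIter β f) t x y| * |GIter ν (pdi j f) t x y| ≤ RHS n f t x y := by
  have hb : BddAbove (Set.range fun j : Fin 3 => |GIter ν (pdi j f) t x y|) :=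
    (Set.finite_range _).bddAbove
  calc |ZZ i (GIter β f) t x y| * |GIter ν (pdi j f) t x y|
      ≤ (⨆ i : Fin 2, |Zi i (GIter β f) t x y|) * (⨆ j : Fin 3, |GIter ν (pdi j f) t x y|) :=
        mul_le_mul (abs_ZZ_le i _ t x y) (le_ciSup hb j) (abs_nonneg _)
          (Real.iSup_nonneg fun _ => abs_nonneg _)
    _ = (⨆ i : Fin 2, |Zi i (GIter (List.ofFn β.get) f) t x y|) *
          (⨆ j : Fin 3, |GIter (List.ofFn ν.get) (pdi j f) t x y|) := by
        rw [List.ofFn_get, List.ofFn_get]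
    _ ≤ ∑ wc : Fin ν.length → Fin 4, (⨆ i : Fin 2, |Zi i (GIter (List.ofFn β.get) f) t x y|) *
          (⨆ j : Fin 3, |GIter (List.ofFn wc) (pdi j f) t x y|) :=
        Finset.single_le_sum (f := fun wc : Fin ν.length → Fin 4 =>
          (⨆ i : Fin 2, |Zi i (GIter (List.ofFn β.get) f) t x y|) *
          (⨆ j : Fin 3, |GIter (List.ofFn wc) (pdi j f) t x y|))
          (fun _ _ => RHS_term_nonneg _ _ _ _ _ _) (Finset.mem_univ ν.get)
    _ ≤ ∑ wb : Fin β.length → Fin 4, ∑ wc : Fin ν.length → Fin 4,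
          (⨆ i : Fin 2, |Zi i (GIter (List.ofFn wb) f) t x y|) *
          (⨆ j : Fin 3, |GIter (List.ofFn wc) (pdi j f) t x y|) :=
        Finset.single_le_sum (f := fun wb : Fin β.length → Fin 4 =>
          ∑ wc : Fin ν.length → Fin 4, (⨆ i : Fin 2, |Zi i (GIter (List.ofFn wb) f) t x y|) *
          (⨆ j : Fin 3, |GIter (List.ofFn wc) (pdi j f) t x y|))
          (fun _ _ => Finset.sum_nonneg fun _ _ => RHS_term_nonneg _ _ _ _ _ _)
          (Finset.mem_univ β.get)
    _ = (if β.length + ν.length ≤ n + 1 then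
          ∑ wb : Fin β.length → Fin 4, ∑ wc : Fin ν.length → Fin 4,
          (⨆ i : Fin 2, |Zi i (GIter (List.ofFn wb) f) t x y|) *
          (⨆ j : Fin 3, |GIter (List.ofFn wc) (pdi j f) t x y|) else 0) := (if_pos h).symm
    _ ≤ ∑ c ∈ Finset.range (n + 1), (if β.length + c ≤ n + 1 then
          ∑ wb : Fin β.length → Fin 4, ∑ wc : Fin c → Fin 4,
          (⨆ i : Fin 2, |Zi i (GIter (List.ofFn wb) f) t x y|) *
          (⨆ j : Fin 3, |GIter (List.ofFn wc) (pdi j f) t x y|) else 0) :=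
        Finset.single_le_sum (f := fun c => (if β.length + c ≤ n + 1 then
          ∑ wb : Fin β.length → Fin 4, ∑ wc : Fin c → Fin 4,
          (⨆ i : Fin 2, |Zi i (GIter (List.ofFn wb) f) t x y|) *
          (⨆ j : Fin 3, |GIter (List.ofFn wc) (pdi j f) t x y|) else 0))
          (fun _ _ => RHS_inner_nonneg _ _ _ _ _ _ _) (Finset.mem_range.2 (by omega))
    _ ≤ RHS n f t x y :=
        Finset.single_le_sum (f := fun b => ∑ c ∈ Finset.range (n + 1), (if b + c ≤ n + 1 then
          ∑ wb : Fin b → Fin 4, ∑ wc : Fin c → Fin 4,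
          (⨆ i : Fin 2, |Zi i (GIter (List.ofFn wb) f) t x y|) *
          (⨆ j : Fin 3, |GIter (List.ofFn wc) (pdi j f) t x y|) else 0))
          (fun _ _ => Finset.sum_nonneg fun _ _ => RHS_inner_nonneg _ _ _ _ _ _ _)
          (Finset.mem_range.2 (by omega))

/-- The previous bound with `∂_j` moved to the left of `Γ^ν`. -/
theorem ZZ_mul_pdi_le {n : ℕ} {β ν : List (Fin 4)} (hβ : β.length ≤ n) (hν : ν.length ≤ n)
    (h : β.length + ν.length ≤ n + 1) (j : Fin 3) :
    ∃ C, 0 ≤ C ∧ ∀ (i : Fin 3) (f : Sm) (t x y : ℝ),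
      |ZZ i (GIter β f.1) t x y| * |pdi j (GIter ν f.1) t x y| ≤ C * RHS n f.1 t x y := by
  have hmem := dd_GW_mem j ν
  have : ∃ C, 0 ≤ C ∧ ∀ (i : Fin 3) (f : Sm) (t x y : ℝ),
      |ZZ i (GIter β f.1) t x y| * |((dd j ∘ₗ GW ν) f).1 t x y| ≤ C * RHS n f.1 t x y := by
    refine Submodule.span_induction
      (p := fun D _ => ∃ C, 0 ≤ C ∧ ∀ (i : Fin 3) (f : Sm) (t x y : ℝ),
        |ZZ i (GIter β f.1) t x y| * |(D f).1 t x y| ≤ C * RHS n f.1 t x y) ?_ ?_ ?_ ?_ hmem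
    · rintro D ⟨v, hv, rfl⟩
      refine ⟨1, zero_le_one, fun i f t x y => ?_⟩
      rw [one_mul, LinearMap.comp_apply, GW_val, dd_apply]
      exact ZZ_mul_le_RHS hβ (hv.trans hν) (by omega) _ _ _ _ _ _
    · refine ⟨0, le_rfl, fun i f t x y => ?_⟩
      have h0 : (((0 : Sm →ₗ[ℝ] Sm) f).1 t x y) = 0 := rfl
      rw [h0]
      simp
    · rintro D E _ _ ⟨C, hC, hD⟩ ⟨C', hC', hE⟩
      refine ⟨C + C', by positivity, fun i f t x y => ?_⟩
      have hs : ((D + E) f).1 t x y = (D f).1 t x y + (E f).1 t x y := rfl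
      rw [hs, add_mul]
      refine le_trans ?_ (add_le_add (hD i f t x y) (hE i f t x y))
      rw [← mul_add]
      exact mul_le_mul_of_nonneg_left (abs_add_le _ _) (abs_nonneg _)
    · rintro c D _ ⟨C, hC, hD⟩
      refine ⟨|c| * C, by positivity, fun i f t x y => ?_⟩
      have hs : ((c • D) f).1 t x y = c * (D f).1 t x y := rfl
      rw [hs, abs_mul, mul_left_comm, mul_assoc]
      exact mul_le_mul_of_nonneg_left (hD i f t x y) (abs_nonneg _)
  obtain ⟨C, hC, hle⟩ := this
  refine ⟨C, hC, fun i f t x y => ?_⟩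
  have := hle i f t x y
  rwa [LinearMap.comp_apply, dd_apply, GW_val] at this

theorem GIter_castSucc (k : Fin 3) (γ : List (Fin 4)) (f : F3) :
    GIter (k.castSucc :: γ) f = pdi k (GIter γ f) := by
  fin_cases k <;> rfl

/-- Null form bound for a single term of the expansion. A second derivative `∂_j ∂_k Γ^γ f` is
read as `∂_j` applied to the word `∂_k Γ^γ` of length `|γ| + 1 ≤ n`. -/
theorem QQ_bound {g : Fin 3 → Fin 3 → Fin 3 → ℝ}
    (hnull : ∀ p : Fin 3 → ℝ, (p 0) ^ 2 = (p 1) ^ 2 + (p 2) ^ 2 →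
      ∑ i, ∑ j, ∑ k, g i j k * p i * p j * p k = 0)
    {n : ℕ} {β γ : List (Fin 4)} (h1 : β.length + γ.length ≤ n) (h2 : γ.length < n) :
    ∃ C, 0 ≤ C ∧ ∀ (f : Sm) (t x y : ℝ), (x, y) ≠ ((0 : ℝ), (0 : ℝ)) →
      |(QQ g (GW β f) (GW γ f)).1 t x y| ≤ C * RHS n f.1 t x y := by
  have hA : ∀ j k : Fin 3, ∃ C, 0 ≤ C ∧ ∀ (i : Fin 3) (f : Sm) (t x y : ℝ),
      |ZZ i (GIter β f.1) t x y| * |pdi j (pdi k (GIter γ f.1)) t x y| ≤ C * RHS n f.1 t x y := by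
    intro j k
    have := ZZ_mul_pdi_le (n := n) (β := β) (ν := k.castSucc :: γ) (by omega)
      (by simp; omega) (by simp; omega) j
    simpa only [GIter_castSucc] using this
  have hB : ∀ k : Fin 3, ∃ C, 0 ≤ C ∧ ∀ (i : Fin 3) (f : Sm) (t x y : ℝ),
      |ZZ i (pdi k (GIter γ f.1)) t x y| * |pdi 0 (GIter β f.1) t x y| ≤ C * RHS n f.1 t x y := by
    intro k
    have := ZZ_mul_pdi_le (n := n) (β := k.castSucc :: γ) (ν := β) (by simp; omega)
      (by omega) (by simp; omega) 0
    simpa only [GIter_castSucc] using this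
  choose A hA0 hA using hA
  choose B hB0 hB using hB
  refine ⟨∑ i, ∑ j, ∑ k, |g i j k| * (A j k + B k + B 0), ?_, fun f t x y hxy => ?_⟩
  · exact Finset.sum_nonneg fun i _ => Finset.sum_nonneg fun j _ => Finset.sum_nonneg fun k _ =>
      mul_nonneg (abs_nonneg _) (add_nonneg (add_nonneg (hA0 j k) (hB0 k)) (hB0 0))
  rw [QQ_null hnull _ _ _ _ _ hxy, GW_val, GW_val]
  simp only [Finset.sum_mul]
  refine (Finset.abs_sum_le_sum_abs _ _).trans (Finset.sum_le_sum fun i _ => ?_)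
  refine (Finset.abs_sum_le_sum_abs _ _).trans (Finset.sum_le_sum fun j _ => ?_)
  refine (Finset.abs_sum_le_sum_abs _ _).trans (Finset.sum_le_sum fun k _ => ?_)
  rw [abs_mul, mul_assoc |g i j k|]
  refine mul_le_mul_of_nonneg_left ?_ (abs_nonneg _)
  have e1 := hA j k i f t x y
  have e2 := hB k j f t x y
  have e3 := hB 0 k f t x y
  have oi := abs_om_le x y i
  have oj := abs_om_le x y j
  refine (abs_add_le _ _).trans ?_
  rw [add_mul, add_mul]
  refine add_le_add ((abs_sub _ _).trans (add_le_add ?_ ?_)) ?_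
  · rwa [abs_mul]
  · refine le_trans ?_ e2
    rw [abs_mul, abs_mul, mul_assoc, mul_comm |pdi 0 _ t x y|]
    exact mul_le_of_le_one_left (by positivity) oi
  · refine le_trans ?_ e3
    rw [abs_mul, abs_mul, abs_mul, mul_assoc, mul_comm |pdi 0 _ t x y|]
    exact mul_le_of_le_one_left (by positivity) (mul_le_one₀ oi (abs_nonneg _) oj)

theorem Err_bound {g : Fin 3 → Fin 3 → Fin 3 → ℝ}
    (hnull : ∀ p : Fin 3 → ℝ, (p 0) ^ 2 = (p 1) ^ 2 + (p 2) ^ 2 →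
      ∑ i, ∑ j, ∑ k, g i j k * p i * p j * p k = 0)
    {m n : ℕ} (hmn : m ≤ n) {D : Sm → Sm} (hD : D ∈ Err g m) :
    ∃ C, 0 ≤ C ∧ ∀ (f : Sm) (t x y : ℝ), (x, y) ≠ ((0 : ℝ), (0 : ℝ)) →
      |(D f).1 t x y| ≤ C * RHS n f.1 t x y := by
  refine Submodule.span_induction
    (p := fun D _ => ∃ C, 0 ≤ C ∧ ∀ (f : Sm) (t x y : ℝ), (x, y) ≠ ((0 : ℝ), (0 : ℝ)) →
      |(D f).1 t x y| ≤ C * RHS n f.1 t x y) ?_ ?_ ?_ ?_ hD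
  · rintro D ⟨β, γ, h1, h2, rfl⟩
    exact QQ_bound hnull (h1.trans hmn) (h2.trans_le hmn)
  · refine ⟨0, le_rfl, fun f t x y _ => ?_⟩
    have h0 : (((0 : Sm → Sm) f).1 t x y) = 0 := rfl
    rw [h0]
    simp
  · rintro D E _ _ ⟨C, hC, hD⟩ ⟨C', hC', hE⟩
    refine ⟨C + C', by positivity, fun f t x y h => ?_⟩
    have hs : ((D + E) f).1 t x y = (D f).1 t x y + (E f).1 t x y := rfl
    rw [hs, add_mul]
    exact (abs_add_le _ _).trans (add_le_add (hD f t x y h) (hE f t x y h))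
  · rintro c D _ ⟨C, hC, hD⟩
    refine ⟨|c| * C, by positivity, fun f t x y h => ?_⟩
    have hs : ((c • D) f).1 t x y = c * (D f).1 t x y := rfl
    rw [hs, abs_mul, mul_assoc]
    exact mul_le_mul_of_nonneg_left (hD f t x y h) (abs_nonneg _)

/-- **Commutator estimate for the first null form** (Lemma 3.1, (3.4)). -/
theorem null_form_commutator_estimate (g : Fin 3 → Fin 3 → Fin 3 → ℝ)
    (hsym : ∀ i j k, g i j k = g i k j)
    (hnull : ∀ p : Fin 3 → ℝ, (p 0) ^ 2 = (p 1) ^ 2 + (p 2) ^ 2 →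
      ∑ i, ∑ j, ∑ k, g i j k * p i * p j * p k = 0) :
    ∀ n : ℕ, ∃ C > 0, ∀ T : ℝ, 0 < T → ∀ f : F3, Smooth3 f →
      ∀ t x y : ℝ, t ∈ Icc (0 : ℝ) T → (x, y) ≠ ((0 : ℝ), (0 : ℝ)) →
        (∑ a ∈ Finset.range (n + 1), ∑ w : Fin a → Fin 4,
          |GIter (List.ofFn w)
              (fun s u v => ∑ i, ∑ j, ∑ k, g i j k * pdi i f s u v * pdi j (pdi k f) s u v)
              t x y
            - ∑ i, ∑ j, ∑ k,
                g i j k * pdi i f t x y * pdi j (pdi k (GIter (List.ofFn w) f)) t x y|)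
        ≤ C * ∑ b ∈ Finset.range (n + 1), ∑ c ∈ Finset.range (n + 1),
            (if b + c ≤ n + 1 then
              ∑ wb : Fin b → Fin 4, ∑ wc : Fin c → Fin 4,
                (⨆ i : Fin 2, |Zi i (GIter (List.ofFn wb) f) t x y|) *
                (⨆ j : Fin 3, |GIter (List.ofFn wc) (pdi j f) t x y|)
            else 0) := by
  intro n
  have hC : ∀ w : List (Fin 4), ∃ C, 0 ≤ C ∧ (w.length ≤ n →
      ∀ (f : Sm) (t x y : ℝ), (x, y) ≠ ((0 : ℝ), (0 : ℝ)) →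
        |(GW w (QQ g f f) - QQ g f (GW w f)).1 t x y| ≤ C * RHS n f.1 t x y) := by
    intro w
    by_cases hw : w.length ≤ n
    · obtain ⟨C, hC, h⟩ := Err_bound hnull hw (commutator_mem_Err g w)
      exact ⟨C, hC, fun _ => h⟩
    · exact ⟨0, le_rfl, fun h => absurd h hw⟩
  choose C hC0 hC using hC
  have hS : 0 ≤ ∑ a ∈ Finset.range (n + 1), ∑ w : Fin a → Fin 4, C (List.ofFn w) :=
    Finset.sum_nonneg fun _ _ => Finset.sum_nonneg fun _ _ => hC0 _
  refine ⟨(∑ a ∈ Finset.range (n + 1), ∑ w : Fin a → Fin 4, C (List.ofFn w)) + 1,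
    by linarith, ?_⟩
  intro T _ f hf t x y _ hxy
  change _ ≤ _ * RHS n f t x y
  have hR := RHS_nonneg n f t x y
  refine le_trans ?_ (mul_le_mul_of_nonneg_right (le_add_of_nonneg_right zero_le_one) hR)
  rw [Finset.sum_mul]
  refine Finset.sum_le_sum fun a ha => ?_
  rw [Finset.sum_mul]
  refine Finset.sum_le_sum fun w _ => ?_
  have hlen : (List.ofFn w).length ≤ n := by
    rw [List.length_ofFn]
    exact Nat.lt_succ_iff.1 (Finset.mem_range.1 ha)
  have key := hC (List.ofFn w) hlen ⟨f, hf⟩ t x y hxy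
  have hQ : (QQ g ⟨f, hf⟩ ⟨f, hf⟩).1 =
      fun s u v => ∑ i, ∑ j, ∑ k, g i j k * pdi i f s u v * pdi j (pdi k f) s u v := by
    funext s u v
    exact QQ_val g _ _ s u v
  have hs : (GW (List.ofFn w) (QQ g ⟨f, hf⟩ ⟨f, hf⟩) - QQ g ⟨f, hf⟩ (GW (List.ofFn w) ⟨f, hf⟩)).1
      t x y = (GW (List.ofFn w) (QQ g ⟨f, hf⟩ ⟨f, hf⟩)).1 t x y -
        (QQ g ⟨f, hf⟩ (GW (List.ofFn w) ⟨f, hf⟩)).1 t x y := rfl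
  rw [hs, GW_val, hQ, QQ_val, GW_val] at key
  exact key

end
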